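/- Let q be a two-variable polynomial of bidegree (N, M) with reflection q⃖, let u, v be any two-variable polynomials, and let g ∈ H²(𝔻²). Then ⟨u·q·g, v·q·g⟩ = ⟨u·q⃖·g, v·q⃖·g⟩; in particular, ‖q·g‖ = ‖q⃖·g‖ and ‖q⃖‖ = ‖q‖. -/

import Mathlib

noncomputable section

open Finset

/-- Coefficients of a formal power series in two variables `z, w`
(the coefficient of `z^j w^k` is the value at `(j, k)`). -/
abbrev Coef := ℕ × ℕ → ℂ

/-- Coefficients of a formal power series in one variable. -/
abbrev Coef1 := ℕ → ℂ

/-- Membership in the Hardy space `H²(𝔻²)`: square-summable coefficients. -/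
def MemH2 (f : Coef) : Prop := Summable (fun jk : ℕ × ℕ => ‖f jk‖ ^ 2)

/-- Membership in the Hardy space `H²(𝔻)`. -/
def MemH2₁ (f : Coef1) : Prop := Summable (fun j : ℕ => ‖f j‖ ^ 2)

/-- The `H²(𝔻²)` inner product `⟨f, g⟩ = ∑ a_{jk} conj (b_{jk})`. -/
def Hinner (f g : Coef) : ℂ := ∑' jk : ℕ × ℕ, f jk * (starRingEnd ℂ) (g jk)

/-- The `H²(𝔻²)` norm. -/
def Hnorm (f : Coef) : ℝ := Real.sqrt (∑' jk : ℕ × ℕ, ‖f jk‖ ^ 2)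

/-- The `H²(𝔻)` norm. -/
def Hnorm1 (f : Coef1) : ℝ := Real.sqrt (∑' j : ℕ, ‖f j‖ ^ 2)

/-- The constant function `1` as an element of `H²(𝔻²)`. -/
def oneH : Coef := fun jk => if jk = (0, 0) then 1 else 0

/-- The constant function `1` as an element of `H²(𝔻)`. -/
def oneH1 : Coef1 := fun j => if j = 0 then 1 else 0

/-- Cauchy product `q·f` of two formal power series in two variables
(used for multiplication of `f ∈ H²(𝔻²)` by a polynomial `q`). -/
def pmul (q f : Coef) : Coef := fun jk =>
  ∑ a ∈ range (jk.1 + 1), ∑ b ∈ range (jk.2 + 1), q (a, b) * f (jk.1 - a, jk.2 - b)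

/-- Multiplication of a one-variable power series by a one-variable polynomial. -/
def pmul1 (q : Polynomial ℂ) (f : Coef1) : Coef1 := fun j =>
  ∑ a ∈ range (j + 1), q.coeff a * f (j - a)

/-- Degree-lexicographic enumeration of the monomials in `z, w`:
`chi 0 = (0,0) ↔ 1`, `chi 1 = (1,0) ↔ z`, `chi 2 = (0,1) ↔ w`,
`chi 3 = (2,0) ↔ z²`, `chi 4 = (1,1) ↔ zw`, `chi 5 = (0,2) ↔ w²`, … -/
def chi : ℕ → ℕ × ℕ
  | 0 => (0, 0)
  | n + 1 =>
    let p := chi n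
    if p.1 = 0 then (p.2 + 1, 0) else (p.1 - 1, p.2 + 1)

/-- The monomial `z^(ab.1) w^(ab.2)` as a coefficient function. -/
def mono (ab : ℕ × ℕ) : Coef := fun jk => if jk = ab then 1 else 0

/-- `p` lies in `P_n = span {χ_0, …, χ_n}`. -/
def inPn (n : ℕ) (p : Coef) : Prop := ∀ ab, p ab ≠ 0 → ∃ k ≤ n, chi k = ab

/-- `p` is a (two-variable) polynomial: finitely many nonzero coefficients. -/
def IsPoly2 (p : Coef) : Prop := (Function.support p).Finite

/-- Evaluation of a power series at the point `(z, w)`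
(absolutely convergent for `f ∈ H²(𝔻²)` and `(z,w)` in the open bidisk,
and for any polynomial at any point). -/
def heval (f : Coef) (z w : ℂ) : ℂ := ∑' jk : ℕ × ℕ, f jk * z ^ jk.1 * w ^ jk.2

/-- `p` is the `n`-th optimal polynomial approximant to `1/f`:
`p ∈ P_n` and `p` minimizes `‖qf - 1‖` over `q ∈ P_n`. -/
def IsOPA (f : Coef) (n : ℕ) (p : Coef) : Prop :=
  inPn n p ∧ ∀ q : Coef, inPn n q →
    Hnorm (pmul p f - oneH) ≤ Hnorm (pmul q f - oneH)

/-- `q` has bidegree `(N, M)`: degree `N` in `z` and degree `M` in `w`. -/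
def HasBidegree (q : Coef) (N M : ℕ) : Prop :=
  (∀ a b : ℕ, q (a, b) ≠ 0 → a ≤ N ∧ b ≤ M) ∧ (∃ b, q (N, b) ≠ 0) ∧ (∃ a, q (a, M) ≠ 0)

/-- Reflection of a polynomial of bidegree `(N, M)`:
the coefficient of `z^j w^k` is `conj` of the coefficient of `z^(N-j) w^(M-k)`. -/
def reflPoly (N M : ℕ) (q : Coef) : Coef := fun jk =>
  if jk.1 ≤ N ∧ jk.2 ≤ M then (starRingEnd ℂ) (q (N - jk.1, M - jk.2)) else 0

/-- The degree-lexicographic index of the monomial `z^(ab.1) w^(ab.2)`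
(the inverse of `chi`). -/
def lexIndex (ab : ℕ × ℕ) : ℕ := (ab.1 + ab.2) * (ab.1 + ab.2 + 1) / 2 + ab.2

/-- `pound k j` = the degree-lexicographic index `£(k,j)` of the monomial `(χ_k)^j`. -/
def pound (k j : ℕ) : ℕ := lexIndex (j * (chi k).1, j * (chi k).2)

/-- The linear factor `z - α` as a coefficient function. -/
def linZ (α : ℂ) : Coef := fun jk => if jk = (1, 0) then 1 else if jk = (0, 0) then -α else 0

/-- The linear factor `w - β` as a coefficient function. -/
def linW (β : ℂ) : Coef := fun jk => if jk = (0, 1) then 1 else if jk = (0, 0) then -β else 0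

/-!
On the torus a polynomial `q` of bidegree at most `(N, M)` satisfies `q⃖ = z^N w^M conj q`, hence
`|q⃖| = |q|`. Multiplication by monomials is only isometric on `H²(𝔻²)`, not unitary, but one half
of this identity survives: `⟨q f, h⟩ = ⟨z^N w^M f, q⃖ h⟩` for `f, h ∈ H²(𝔻²)`. As reflection is an
involution, commuting `q` past `q⃖` gives
`⟨q f, q h⟩ = ⟨z^N w^M f, q⃖ q h⟩ = ⟨z^N w^M f, q q⃖ h⟩ = ⟨q⃖ f, q⃖ h⟩`,
which is then applied to `f = u g` and `h = v g`.
-/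

section CauchyProduct

variable (p q f : Coef)

theorem pmul_apply (x : ℕ × ℕ) : pmul p f x = ∑ s ∈ Iic x, p s * f (x - s) := by
  have Iic_eq : Iic x = range (x.1 + 1) ×ˢ range (x.2 + 1) := by
    ext s
    simp [Prod.le_def]
  rw [Iic_eq, sum_product]
  rfl

/-- The power series in `z`, with power series in `w` as coefficients, that has the coefficients
`f`: it identifies `pmul` with the multiplication of a commutative ring. -/
def toPowerSeries (f : Coef) : PowerSeries (PowerSeries ℂ) :=
  .mk fun j => .mk fun k => f (j, k)

theorem toPowerSeries_injective : Function.Injective toPowerSeries := by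
  intro f g h
  ext ⟨j, k⟩
  simpa [toPowerSeries] using congrArg (fun F => (F.coeff j).coeff k) h

theorem toPowerSeries_pmul : toPowerSeries (pmul p f) = toPowerSeries p * toPowerSeries f := by
  ext j k
  simp [toPowerSeries, pmul, PowerSeries.coeff_mul, Nat.sum_antidiagonal_eq_sum_range_succ_mk]

theorem pmul_comm : pmul p f = pmul f p :=
  toPowerSeries_injective <| by simp only [toPowerSeries_pmul, mul_comm]

theorem pmul_left_comm : pmul p (pmul q f) = pmul q (pmul p f) :=
  toPowerSeries_injective <| by simp only [toPowerSeries_pmul, mul_left_comm]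

theorem pmul_sum_smul_left {ι : Type*} (S : Finset ι) (c : ι → ℂ) (P : ι → Coef) :
    pmul (∑ i ∈ S, c i • P i) f = ∑ i ∈ S, c i • pmul (P i) f := by
  ext x
  simp only [pmul_apply, Finset.sum_apply, Pi.smul_apply, smul_eq_mul, sum_mul, mul_sum, mul_assoc]
  exact sum_comm

end CauchyProduct

section Monomial

variable (r s x : ℕ × ℕ) (f : Coef)

theorem pmul_mono_apply : pmul (mono r) f x = if r ≤ x then f (x - r) else 0 := by
  simp [pmul_apply, mono]

theorem pmul_mono_apply_add : pmul (mono r) f (r + x) = f x := by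
  simp [pmul_mono_apply]

theorem pmul_mono_zero : pmul (mono 0) f = f := by
  ext x
  simp [pmul_mono_apply]

theorem pmul_mono_add : pmul (mono (r + s)) f = pmul (mono r) (pmul (mono s) f) := by
  ext x
  have le_iff : r + s ≤ x ↔ r ≤ x ∧ s ≤ x - r :=
    ⟨fun h => ⟨le_self_add.trans h, le_tsub_of_add_le_left h⟩,
      fun ⟨hr, hs⟩ => (le_tsub_iff_left hr).1 hs⟩
  simp only [pmul_mono_apply, le_iff, ite_and, tsub_add_eq_tsub_tsub]

theorem support_pmul_mono_subset : Function.support (pmul (mono r) f) ⊆ Set.range (r + ·) := by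
  intro x hx
  have hrx : r ≤ x := by
    by_contra hrx
    exact hx (by rw [pmul_mono_apply, if_neg hrx])
  exact ⟨x - r, add_tsub_cancel_of_le hrx⟩

variable {f}

theorem eq_sum_smul_mono {S : Finset (ℕ × ℕ)} (hS : Function.support f ⊆ S) :
    f = ∑ s ∈ S, f s • mono s := by
  ext x
  have hx : x ∉ S → f x = 0 := fun hxS => by_contra fun hfx => hxS (hS hfx)
  simpa [mono, Finset.sum_apply] using hx

end Monomial

section HardySpace

variable {f g : Coef}

theorem memH2_iff_memℓp : MemH2 f ↔ Memℓp f 2 := by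
  simp [MemH2, memℓp_gen_iff]

theorem MemH2.sum_smul {ι : Type*} {S : Finset ι} (c : ι → ℂ) {F : ι → Coef}
    (hF : ∀ i ∈ S, MemH2 (F i)) : MemH2 (∑ i ∈ S, c i • F i) := by
  simp only [memH2_iff_memℓp] at hF ⊢
  simpa only [← Finset.sum_apply] using! Memℓp.finsetSum S fun i hi => (hF i hi).const_smul (c i)

theorem MemH2.summable_mul_conj (hf : MemH2 f) (hg : MemH2 g) :
    Summable fun x => f x * (starRingEnd ℂ) (g x) :=
  lp.summable_inner (𝕜 := ℂ) ⟨g, memH2_iff_memℓp.1 hg⟩ ⟨f, memH2_iff_memℓp.1 hf⟩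

theorem conj_hinner (f g : Coef) : (starRingEnd ℂ) (Hinner f g) = Hinner g f := by
  simp [Hinner, Complex.conj_tsum, mul_comm]

theorem hinner_sum_smul_left {ι : Type*} {S : Finset ι} (c : ι → ℂ) {F : ι → Coef}
    (hF : ∀ i ∈ S, MemH2 (F i)) (hg : MemH2 g) :
    Hinner (∑ i ∈ S, c i • F i) g = ∑ i ∈ S, c i * Hinner (F i) g := by
  simp only [Hinner, Finset.sum_apply, Pi.smul_apply, smul_eq_mul, sum_mul, mul_assoc,
    ← tsum_mul_left]
  exact Summable.tsum_finsetSum fun i hi => ((hF i hi).summable_mul_conj hg).mul_left (c i)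

theorem hinner_sum_smul_right {ι : Type*} {S : Finset ι} (c : ι → ℂ) {F : ι → Coef}
    (hf : MemH2 f) (hF : ∀ i ∈ S, MemH2 (F i)) :
    Hinner f (∑ i ∈ S, c i • F i) = ∑ i ∈ S, (starRingEnd ℂ) (c i) * Hinner f (F i) := by
  rw [← conj_hinner, hinner_sum_smul_left c hF hf]
  simp only [map_sum, map_mul, conj_hinner]

theorem hnorm_eq_sqrt_re_hinner_self (f : Coef) : Hnorm f = √(Hinner f f).re := by
  have hinner_self : Hinner f f = ((∑' x, ‖f x‖ ^ 2 : ℝ) : ℂ) := by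
    simp [Hinner, Complex.mul_conj', Complex.ofReal_tsum]
  rw [hinner_self, Complex.ofReal_re, Hnorm]

theorem memH2_oneH : MemH2 oneH :=
  summable_of_ne_finset_zero (s := {(0, 0)}) fun x hx => by simp_all [oneH]

theorem pmul_oneH (f : Coef) : pmul f oneH = f := by
  rw [pmul_comm]
  exact pmul_mono_zero f

theorem MemH2.pmul_mono (r : ℕ × ℕ) (hf : MemH2 f) : MemH2 (pmul (mono r) f) := by
  refine ((add_right_injective r).summable_iff fun x hx => ?_).1 ?_
  · simp [Function.notMem_support.1 fun h => hx (support_pmul_mono_subset r f h)]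
  · simpa only [Function.comp_def, pmul_mono_apply_add] using! hf

theorem hinner_pmul_mono_pmul_mono (r : ℕ × ℕ) (f g : Coef) :
    Hinner (pmul (mono r) f) (pmul (mono r) g) = Hinner f g := by
  rw [Hinner, ← (add_right_injective r).tsum_eq fun x hx =>
    support_pmul_mono_subset r f (left_ne_zero_of_mul hx)]
  simp only [pmul_mono_apply_add, Hinner]

theorem MemH2.pmul {p : Coef} (hp : IsPoly2 p) (hf : MemH2 f) : MemH2 (pmul p f) := by
  rw [eq_sum_smul_mono hp.coe_toFinset.ge, pmul_sum_smul_left]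
  exact .sum_smul _ fun r _ => hf.pmul_mono r

end HardySpace

section Reflection

theorem reflPoly_tsub {N M : ℕ} (q : Coef) {s : ℕ × ℕ} (hs : s ≤ (N, M)) :
    reflPoly N M q ((N, M) - s) = (starRingEnd ℂ) (q s) :=
  (if_pos (tsub_le_self : (N, M) - s ≤ (N, M))).trans <|
    congrArg (fun t => (starRingEnd ℂ) (q t)) (tsub_tsub_cancel_of_le hs)

variable (N M : ℕ) (q : Coef)

theorem support_reflPoly_subset : Function.support (reflPoly N M q) ⊆ Set.Iic (N, M) := by
  intro x hx
  by_contra hxNM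
  exact hx (if_neg hxNM)

theorem reflPoly_eq_sum_smul_mono :
    reflPoly N M q = ∑ s ∈ Iic (N, M), (starRingEnd ℂ) (q s) • mono ((N, M) - s) := by
  have tsub_tsub_cancel : ∀ s ∈ Iic (N, M), (N, M) - ((N, M) - s) = s := fun s hs =>
    tsub_tsub_cancel_of_le (mem_Iic.1 hs)
  calc reflPoly N M q
    _ = ∑ s ∈ Iic (N, M), reflPoly N M q s • mono s :=
      eq_sum_smul_mono (by simpa using support_reflPoly_subset N M q)
    _ = ∑ s ∈ Iic (N, M), reflPoly N M q ((N, M) - s) • mono ((N, M) - s) :=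
      sum_nbij' ((N, M) - ·) ((N, M) - ·) (by simp) (by simp) tsub_tsub_cancel tsub_tsub_cancel
        fun s hs => by rw [tsub_tsub_cancel s hs]
    _ = ∑ s ∈ Iic (N, M), (starRingEnd ℂ) (q s) • mono ((N, M) - s) :=
      sum_congr rfl fun s hs => by rw [reflPoly_tsub q (mem_Iic.1 hs)]

variable {N M q} {f h : Coef}

theorem reflPoly_reflPoly (hq : Function.support q ⊆ Set.Iic (N, M)) :
    reflPoly N M (reflPoly N M q) = q := by
  ext x
  by_cases hx : x ≤ (N, M)
  · calc reflPoly N M (reflPoly N M q) x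
      _ = reflPoly N M (reflPoly N M q) ((N, M) - ((N, M) - x)) := by
        rw [tsub_tsub_cancel_of_le hx]
      _ = q x := by rw [reflPoly_tsub _ tsub_le_self, reflPoly_tsub q hx, Complex.conj_conj]
  · rw [Function.notMem_support.1 fun h => hx (hq h)]
    exact if_neg hx

theorem isPoly2_of_support_subset_Iic {d : ℕ × ℕ} (hq : Function.support q ⊆ Set.Iic d) :
    IsPoly2 q :=
  (Set.finite_Iic d).subset hq

theorem hinner_pmul_left (hq : Function.support q ⊆ Set.Iic (N, M)) (hf : MemH2 f)
    (hh : MemH2 h) :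
    Hinner (pmul q f) h = Hinner (pmul (mono (N, M)) f) (pmul (reflPoly N M q) h) := by
  have hinner_mono : ∀ s ∈ Iic (N, M), Hinner (pmul (mono s) f) h =
      Hinner (pmul (mono (N, M)) f) (pmul (mono ((N, M) - s)) h) := fun s hs => by
    rw [← hinner_pmul_mono_pmul_mono ((N, M) - s), ← pmul_mono_add,
      tsub_add_cancel_of_le (mem_Iic.1 hs)]
  calc Hinner (pmul q f) h
    _ = ∑ s ∈ Iic (N, M), q s * Hinner (pmul (mono s) f) h := by
      rw [← hinner_sum_smul_left q (fun s _ => hf.pmul_mono s) hh, ← pmul_sum_smul_left,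
        ← eq_sum_smul_mono (by simpa using hq)]
    _ = ∑ s ∈ Iic (N, M),
          q s * Hinner (pmul (mono (N, M)) f) (pmul (mono ((N, M) - s)) h) :=
      sum_congr rfl fun s hs => by rw [hinner_mono s hs]
    _ = Hinner (pmul (mono (N, M)) f) (pmul (reflPoly N M q) h) := by
      rw [reflPoly_eq_sum_smul_mono, pmul_sum_smul_left,
        hinner_sum_smul_right _ (hf.pmul_mono _) fun s _ => hh.pmul_mono _]
      simp only [Complex.conj_conj]

theorem hinner_pmul_pmul_eq_reflPoly (hq : Function.support q ⊆ Set.Iic (N, M)) (hf : MemH2 f)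
    (hh : MemH2 h) :
    Hinner (pmul q f) (pmul q h) = Hinner (pmul (reflPoly N M q) f) (pmul (reflPoly N M q) h) := by
  have hq' := support_reflPoly_subset N M q
  calc Hinner (pmul q f) (pmul q h)
    _ = Hinner (pmul (mono (N, M)) f) (pmul (reflPoly N M q) (pmul q h)) :=
      hinner_pmul_left hq hf (hh.pmul (isPoly2_of_support_subset_Iic hq))
    _ = Hinner (pmul (mono (N, M)) f) (pmul q (pmul (reflPoly N M q) h)) := by
      rw [pmul_left_comm]
    _ = Hinner (pmul (reflPoly N M q) f) (pmul (reflPoly N M q) h) := by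
      rw [hinner_pmul_left hq' hf (hh.pmul (isPoly2_of_support_subset_Iic hq')),
        reflPoly_reflPoly hq]

theorem hnorm_pmul_eq_reflPoly (hq : Function.support q ⊆ Set.Iic (N, M)) (hf : MemH2 f) :
    Hnorm (pmul q f) = Hnorm (pmul (reflPoly N M q) f) := by
  simp only [hnorm_eq_sqrt_re_hinner_self, hinner_pmul_pmul_eq_reflPoly hq hf hf]

theorem hnorm_reflPoly (hq : Function.support q ⊆ Set.Iic (N, M)) :
    Hnorm (reflPoly N M q) = Hnorm q := by
  simpa only [pmul_oneH] using (hnorm_pmul_eq_reflPoly hq memH2_oneH).symm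

end Reflection

theorem statement6_general (q u v g : Coef) (N M : ℕ) (hq : Function.support q ⊆ Set.Iic (N, M))
    (hu : MemH2 (pmul u g)) (hv : MemH2 (pmul v g)) (hg : MemH2 g) :
    Hinner (pmul u (pmul q g)) (pmul v (pmul q g)) =
      Hinner (pmul u (pmul (reflPoly N M q) g)) (pmul v (pmul (reflPoly N M q) g)) ∧
    Hnorm (pmul q g) = Hnorm (pmul (reflPoly N M q) g) ∧
    Hnorm (reflPoly N M q) = Hnorm q := by
  refine ⟨?_, hnorm_pmul_eq_reflPoly hq hg, hnorm_reflPoly hq⟩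
  simpa only [pmul_left_comm u, pmul_left_comm v] using hinner_pmul_pmul_eq_reflPoly hq hu hv

/-- For a polynomial `q` of bidegree `(N, M)`, any polynomials `u, v`, and any
`g ∈ H²(𝔻²)`: `⟨u q g, v q g⟩ = ⟨u q⃖ g, v q⃖ g⟩`; in particular `‖q g‖ = ‖q⃖ g‖` and
`‖q⃖‖ = ‖q‖`. -/
theorem statement6 (q u v g : Coef) (N M : ℕ) (hq : HasBidegree q N M)
    (hu : IsPoly2 u) (hv : IsPoly2 v) (hg : MemH2 g) :
    Hinner (pmul u (pmul q g)) (pmul v (pmul q g)) =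
      Hinner (pmul u (pmul (reflPoly N M q) g)) (pmul v (pmul (reflPoly N M q) g)) ∧
    Hnorm (pmul q g) = Hnorm (pmul (reflPoly N M q) g) ∧
    Hnorm (reflPoly N M q) = Hnorm q := by
  exact statement6_general q u v g N M (fun x hx => hq.1 x.1 x.2 hx) (hg.pmul hu) (hg.pmul hv) hg
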